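/- Every complex solution ρ of the equation 4^ρ − 2^ρ + 2 = 0 satisfies Re(ρ) = 1/2. Consequently, every zero ρ ≠ 1 of E(·, 1/3) with ζ(ρ) ≠ 0 lies on the critical line Re(ρ) = 1/2. -/

import Mathlib

/-!
With `x = 2 ^ ρ` the equation reads `x² - x + 2 = 0`, whose roots are non-real conjugates of
product `2`; hence `‖x‖² = 2`, while `‖x‖ = 2 ^ Re ρ`.

For `Δ = 1/3` the two Hurwitz parameters are `3/4` and `1/4`, with numerators the residues coprime to `4`.
Thus `4 ^ (-s) (ζ(s, 1/4) + ζ(s, 3/4))` is the `L`-function of the trivial Dirichlet character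
modulo `4`, which is `(1 - 2 ^ (-s)) ζ(s)` for all `s ≠ 1`. So `E(s, 1/3)` factors as
`2 ^ (-(s + 1)) (4 ^ s - 2 ^ s + 2) ζ(s)`, and its zeros off those of `ζ` solve the equation above.
-/

open Complex HurwitzZeta

/-- The lattice energy `E(s,Δ)` built from the analytically continued Riemann and
Hurwitz zeta functions. -/
noncomputable def latticeEnergy (s : ℂ) (Δ : ℝ) : ℂ :=
  2 ^ (-s) * riemannZeta s +
    2 ^ (-(s + 1)) * (hurwitzZeta (↑(1 / (1 + Δ)) : UnitAddCircle) s +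
      hurwitzZeta (↑(Δ / (1 + Δ)) : UnitAddCircle) s)

lemma four_cpow_eq (s : ℂ) : (4 : ℂ) ^ s = (2 ^ s) ^ 2 := by
  rw [show (4 : ℂ) = ((2 : ℝ) : ℂ) * ((2 : ℝ) : ℂ) by norm_num,
    mul_cpow_ofReal_nonneg (by norm_num) (by norm_num), pow_two]
  norm_num

lemma re_eq_half_of_four_cpow_sub_two_cpow {ρ : ℂ} (h : (4 : ℂ) ^ ρ - 2 ^ ρ + 2 = 0) :
    ρ.re = 1 / 2 := by
  rw [four_cpow_eq] at h
  have hn : ‖(2 : ℂ) ^ ρ‖ = (2 : ℝ) ^ ρ.re := by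
    simpa using norm_cpow_eq_rpow_re_of_pos (x := 2) (by norm_num) ρ
  generalize (2 : ℂ) ^ ρ = x at h hn
  have hre := congrArg re h
  have him := congrArg im h
  simp [pow_two] at hre him
  have hx : x.re = 1 / 2 := by
    have : x.im * (2 * x.re - 1) = 0 := by linarith
    rcases mul_eq_zero.mp this with h0 | h0
    · rw [h0] at hre
      nlinarith [sq_nonneg (x.re - 1 / 2)]
    · linarith
  have hsq : ‖x‖ ^ 2 = 2 := by
    rw [Complex.sq_norm, normSq_apply]
    rw [hx] at hre ⊢
    linarith
  rw [hn, ← Real.rpow_natCast, ← Real.rpow_mul (by norm_num)] at hsq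
  have := (Real.rpow_right_inj (x := 2) (by norm_num) (by norm_num)).mp
    (hsq.trans (Real.rpow_one 2).symm)
  push_cast at this
  linarith

/-- The odd-residue case of the distribution relation modulo `4`, read off from the `L`-function
of the trivial character modulo `4`. -/
lemma hurwitzZeta_quarter_add (s : ℂ) (hs : s ≠ 1) :
    hurwitzZeta ((3 / 4 : ℝ) : UnitAddCircle) s + hurwitzZeta ((1 / 4 : ℝ) : UnitAddCircle) s =
      4 ^ s * (1 - 2 ^ (-s)) * riemannZeta s := by
  have h := DirichletCharacter.LFunctionTrivChar_eq_mul_riemannZeta (N := 4) hs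
  have hp : (4 : ℕ).primeFactors = {2} := by
    rw [show 4 = 2 ^ 2 by norm_num, Nat.primeFactors_prime_pow (by norm_num) Nat.prime_two]
  have c1 : ZMod.toAddCircle (1 : ZMod 4) = ((1 / 4 : ℝ) : UnitAddCircle) := by
    simpa using ZMod.toAddCircle_intCast (N := 4) 1
  have c3 : ZMod.toAddCircle (3 : ZMod 4) = ((3 / 4 : ℝ) : UnitAddCircle) := by
    simpa using ZMod.toAddCircle_intCast (N := 4) 3
  have hsum : ∑ j : ZMod 4, (1 : DirichletCharacter ℂ 4) j * hurwitzZeta (ZMod.toAddCircle j) s =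
      hurwitzZeta (ZMod.toAddCircle (1 : ZMod 4)) s +
        hurwitzZeta (ZMod.toAddCircle (3 : ZMod 4)) s := by
    have u0 : (1 : DirichletCharacter ℂ 4) 0 = 0 := MulChar.map_nonunit _ (by decide)
    have u1 : (1 : DirichletCharacter ℂ 4) 1 = 1 := MulChar.one_apply (by decide)
    have u2 : (1 : DirichletCharacter ℂ 4) 2 = 0 := MulChar.map_nonunit _ (by decide)
    have u3 : (1 : DirichletCharacter ℂ 4) 3 = 1 := MulChar.one_apply (by decide)
    rw [show (Finset.univ : Finset (ZMod 4)) = {0, 1, 2, 3} by decide]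
    rw [Finset.sum_insert (by decide), Finset.sum_insert (by decide),
      Finset.sum_insert (by decide), Finset.sum_singleton, u0, u1, u2, u3]
    ring
  rw [DirichletCharacter.LFunctionTrivChar, DirichletCharacter.LFunction, ZMod.LFunction, hsum,
    c1, c3, hp, Finset.prod_singleton] at h
  have h4 : (4 : ℂ) ^ s * 4 ^ (-s) = 1 := by
    rw [← cpow_add _ _ (by norm_num)]; simp
  push_cast at h
  rw [mul_assoc, ← h, ← mul_assoc, h4, one_mul, add_comm]

lemma latticeEnergy_third (s : ℂ) (hs : s ≠ 1) :
    latticeEnergy s (1 / 3) = 2 ^ (-(s + 1)) * (4 ^ s - 2 ^ s + 2) * riemannZeta s := by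
  rw [latticeEnergy, show (1 / (1 + 1 / 3) : ℝ) = 3 / 4 by norm_num,
    show (1 / 3 / (1 + 1 / 3) : ℝ) = 1 / 4 by norm_num, hurwitzZeta_quarter_add s hs,
    four_cpow_eq, neg_add, cpow_add _ _ (by norm_num), cpow_neg_one, cpow_neg]
  have : (2 : ℂ) ^ s ≠ 0 := by simp [cpow_eq_zero_iff]
  field_simp
  ring

/-- Every complex solution of `4^ρ − 2^ρ + 2 = 0` has real part `1/2`;
consequently every zero `ρ ≠ 1` of `E(·, 1/3)` with `ζ(ρ) ≠ 0` lies on the critical line. -/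
theorem third_offcritical_zeros_on_critical_line :
    (∀ ρ : ℂ, (4 : ℂ) ^ ρ - 2 ^ ρ + 2 = 0 → ρ.re = 1 / 2) ∧
    (∀ ρ : ℂ, ρ ≠ 1 → latticeEnergy ρ (1 / 3) = 0 → riemannZeta ρ ≠ 0 → ρ.re = 1 / 2) := by
  refine ⟨fun ρ h => re_eq_half_of_four_cpow_sub_two_cpow h, fun ρ h1 hE hζ => ?_⟩
  rw [latticeEnergy_third ρ h1, mul_eq_zero, or_iff_left hζ, mul_eq_zero] at hE
  exact re_eq_half_of_four_cpow_sub_two_cpow (hE.resolve_left (by simp [cpow_eq_zero_iff]))
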